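/- For every t = (t₁, …, t_n) ∈ ℝⁿ with |t_j| < π/4 for all j, one has the coset identity Sp(2n,ℝ)·n_t·K_ℂ = Sp(2n,ℝ)·a_t·K_ℂ as subsets of Sp(2n,ℂ), where n_t is the block matrix [[I_n, i·diag(sin 2t₁, …, sin 2t_n)], [0, I_n]] and a_t = diag(e^{it₁}, …, e^{it_n}, e^{−it₁}, …, e^{−it_n}). -/

import Mathlib

open Matrix

/-- The standard symplectic form matrix `J = [[0, I],[−I, 0]]` (over `ℂ`),
with respect to the index set `Fin n ⊕ Fin n`. -/
noncomputable def Jmat (n : ℕ) : Matrix (Fin n ⊕ Fin n) (Fin n ⊕ Fin n) ℂ :=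
  Matrix.fromBlocks 0 1 (-1) 0

/-- The complex symplectic group `Sp(2n,ℂ) = {g : gᵀJg = J}`. -/
noncomputable def SpC (n : ℕ) : Set (Matrix (Fin n ⊕ Fin n) (Fin n ⊕ Fin n) ℂ) :=
  {g | gᵀ * Jmat n * g = Jmat n}

/-- The real symplectic group `Sp(2n,ℝ)`, viewed as the real-entried matrices
in `Sp(2n,ℂ)`. -/
noncomputable def SpR (n : ℕ) : Set (Matrix (Fin n ⊕ Fin n) (Fin n ⊕ Fin n) ℂ) :=
  {g | g ∈ SpC n ∧ ∀ i j, (g i j).im = 0}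

/-- `K_ℂ = {k ∈ Sp(2n,ℂ) : kᵀk = 1}`, the complexified maximal compact subgroup. -/
noncomputable def KC (n : ℕ) : Set (Matrix (Fin n ⊕ Fin n) (Fin n ⊕ Fin n) ℂ) :=
  {k | k ∈ SpC n ∧ kᵀ * k = 1}

/-- `a_t = diag(e^{it₁},…,e^{itₙ},e^{-it₁},…,e^{-itₙ})`. -/
noncomputable def aMat (n : ℕ) (t : Fin n → ℝ) :
    Matrix (Fin n ⊕ Fin n) (Fin n ⊕ Fin n) ℂ :=
  Matrix.fromBlocks (Matrix.diagonal fun j => Complex.exp (Complex.I * (t j : ℂ))) 0 0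
    (Matrix.diagonal fun j => Complex.exp (-(Complex.I * (t j : ℂ))))

/-- `u_s = [[I, i·diag(s₁,…,sₙ)],[0, I]]`. -/
noncomputable def uMat (n : ℕ) (s : Fin n → ℝ) :
    Matrix (Fin n ⊕ Fin n) (Fin n ⊕ Fin n) ℂ :=
  Matrix.fromBlocks 1 (Matrix.diagonal fun j => Complex.I * (s j : ℂ)) 0 1

/-- Block matrix with diagonal blocks. -/
noncomputable def DD (n : ℕ) (a b c d : Fin n → ℂ) :
    Matrix (Fin n ⊕ Fin n) (Fin n ⊕ Fin n) ℂ :=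
  Matrix.fromBlocks (diagonal a) (diagonal b) (diagonal c) (diagonal d)

lemma DD_mul (n : ℕ) (a b c d a' b' c' d' : Fin n → ℂ) :
    DD n a b c d * DD n a' b' c' d' =
      DD n (fun j => a j * a' j + b j * c' j) (fun j => a j * b' j + b j * d' j)
        (fun j => c j * a' j + d j * c' j) (fun j => c j * b' j + d j * d' j) := by
  simp [DD, Matrix.fromBlocks_multiply, Matrix.diagonal_add]

lemma DD_transpose (n : ℕ) (a b c d : Fin n → ℂ) :
    (DD n a b c d)ᵀ = DD n a c b d := by
  simp [DD, Matrix.fromBlocks_transpose]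

lemma Jmat_eq (n : ℕ) :
    Jmat n = DD n (fun _ => 0) (fun _ => 1) (fun _ => -1) (fun _ => 0) := by
  simp only [Jmat, DD, Matrix.diagonal_zero, Matrix.diagonal_one]
  congr 1
  rw [← Matrix.diagonal_one, Matrix.diagonal_neg]

lemma one_eq_DD (n : ℕ) : (1 : Matrix (Fin n ⊕ Fin n) (Fin n ⊕ Fin n) ℂ) =
    DD n (fun _ => 1) (fun _ => 0) (fun _ => 0) (fun _ => 1) := by
  simp [DD, Matrix.fromBlocks_one]

lemma DD_mem_SpC (n : ℕ) (a b c d : Fin n → ℂ) (h : ∀ j, a j * d j - b j * c j = 1) :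
    DD n a b c d ∈ SpC n := by
  simp only [SpC, Set.mem_ofPred_eq, Jmat_eq, DD_transpose, DD_mul]
  congr 1 <;> funext j
  · ring
  · linear_combination h j
  · linear_combination -h j
  · ring

lemma SpC_mul {n : ℕ} {g h : Matrix (Fin n ⊕ Fin n) (Fin n ⊕ Fin n) ℂ}
    (hg : g ∈ SpC n) (hh : h ∈ SpC n) : g * h ∈ SpC n := by
  simp only [SpC, Set.mem_ofPred_eq] at *
  calc (g * h)ᵀ * Jmat n * (g * h) = hᵀ * (gᵀ * Jmat n * g) * h := by
        rw [Matrix.transpose_mul]; simp only [Matrix.mul_assoc]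
    _ = Jmat n := by rw [hg, hh]

lemma SpR_mul {n : ℕ} {g h : Matrix (Fin n ⊕ Fin n) (Fin n ⊕ Fin n) ℂ}
    (hg : g ∈ SpR n) (hh : h ∈ SpR n) : g * h ∈ SpR n := by
  refine ⟨SpC_mul hg.1 hh.1, fun i j => ?_⟩
  rw [Matrix.mul_apply, Complex.im_sum]
  refine Finset.sum_eq_zero fun x _ => ?_
  rw [Complex.mul_im, hg.2, hh.2]; simp

lemma KC_mul {n : ℕ} {g h : Matrix (Fin n ⊕ Fin n) (Fin n ⊕ Fin n) ℂ}
    (hg : g ∈ KC n) (hh : h ∈ KC n) : g * h ∈ KC n := by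
  refine ⟨SpC_mul hg.1 hh.1, ?_⟩
  calc (g * h)ᵀ * (g * h) = hᵀ * (gᵀ * g) * h := by
        rw [Matrix.transpose_mul]; simp only [Matrix.mul_assoc]
    _ = 1 := by rw [hg.2, Matrix.mul_one, hh.2]

lemma DD_mem_SpR (n : ℕ) (a b c d : Fin n → ℝ) (h : ∀ j, a j * d j - b j * c j = 1) :
    DD n (fun j => (a j : ℂ)) (fun j => (b j : ℂ)) (fun j => (c j : ℂ)) (fun j => (d j : ℂ))
      ∈ SpR n := by
  refine ⟨DD_mem_SpC _ _ _ _ _ fun j => by exact_mod_cast h j, ?_⟩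
  rintro (i | i) (j | j) <;> simp only [DD, Matrix.fromBlocks_apply₁₁, Matrix.fromBlocks_apply₁₂,
    Matrix.fromBlocks_apply₂₁, Matrix.fromBlocks_apply₂₂, Matrix.diagonal_apply] <;>
    split_ifs <;> simp

lemma key (n : ℕ) (t : Fin n → ℝ) (ht : ∀ j, |t j| < Real.pi / 4) :
    ∃ g ∈ SpR n, ∃ g' ∈ SpR n, ∃ k ∈ KC n, ∃ k' ∈ KC n, g' * g = 1 ∧ k * k' = 1 ∧
      uMat n (fun j => Real.sin (2 * t j)) = g * aMat n t * k := by
  have hc : ∀ j, 0 < Real.cos (2 * t j) := fun j => by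
    have := abs_lt.1 (ht j)
    exact Real.cos_pos_of_mem_Ioo ⟨by linarith, by linarith⟩
  have hw : ∀ j, ∃ w : ℝ, 2 * w ^ 2 * Real.cos (2 * t j) = 1 := fun j => by
    refine ⟨√(1 / (2 * Real.cos (2 * t j))), ?_⟩
    have := hc j
    rw [Real.sq_sqrt (by positivity)]
    field_simp
  choose w hw using hw
  set e : Fin n → ℂ := fun j => Complex.exp (Complex.I * (t j : ℂ)) with he
  set f : Fin n → ℂ := fun j => Complex.exp (-(Complex.I * (t j : ℂ))) with hf
  have hef : ∀ j, e j * f j = 1 := fun j => by simp [he, hf, ← Complex.exp_add]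
  have he2 : ∀ j, e j ^ 2 = Real.cos (2 * t j) + Real.sin (2 * t j) * Complex.I := fun j => by
    simp only [he, ← Complex.exp_nat_mul]
    push_cast
    rw [← Complex.exp_mul_I]; congr 1; ring
  have hf2 : ∀ j, f j ^ 2 = Real.cos (2 * t j) - Real.sin (2 * t j) * Complex.I := fun j => by
    simp only [hf, ← Complex.exp_nat_mul]
    push_cast
    have := Complex.exp_mul_I (-(2 * t j : ℂ))
    rw [Complex.cos_neg, Complex.sin_neg] at this
    rw [neg_mul (Complex.sin _), ← sub_eq_add_neg] at this
    rw [← this]; congr 1; ring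
  have hwC : ∀ j, 2 * (w j : ℂ) ^ 2 * (Real.cos (2 * t j) : ℂ) = 1 := fun j => by
    exact_mod_cast hw j
  set c : Fin n → ℝ := fun j => Real.cos (2 * t j) with hcdef
  set s : Fin n → ℝ := fun j => Real.sin (2 * t j) with hsdef
  have he2' : ∀ j, e j ^ 2 = c j + s j * Complex.I := he2
  have hf2' : ∀ j, f j ^ 2 = c j - s j * Complex.I := hf2
  have hwC' : ∀ j, 2 * (w j : ℂ) ^ 2 * (c j : ℂ) = 1 := hwC
  have hw' : ∀ j, 2 * w j ^ 2 * c j = 1 := hw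
  have ha : aMat n t = DD n e (fun _ => 0) (fun _ => 0) f := by
    simp [aMat, DD, he, hf]
  have hu : uMat n s = DD n (fun _ => 1) (fun j => Complex.I * (s j : ℂ))
      (fun _ => 0) (fun _ => 1) := by
    simp [uMat, DD]
  refine ⟨_, DD_mem_SpR n (fun j => w j * c j) (fun j => -(w j * c j)) w w ?_,
    _, DD_mem_SpR n w (fun j => w j * c j) (fun j => - w j) (fun j => w j * c j) ?_,
    DD n (fun j => w j * f j) (fun j => w j * e j) (fun j => -(w j * e j)) (fun j => w j * f j),
    ⟨DD_mem_SpC _ _ _ _ _ ?_, ?_⟩,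
    DD n (fun j => w j * f j) (fun j => -(w j * e j)) (fun j => w j * e j) (fun j => w j * f j),
    ⟨DD_mem_SpC _ _ _ _ _ ?_, ?_⟩, ?_, ?_, ?_⟩
  · intro j; linear_combination hw' j
  · intro j; linear_combination hw' j
  · intro j; linear_combination hwC' j + (w j : ℂ) ^ 2 * (he2' j + hf2' j)
  · rw [DD_transpose, DD_mul, one_eq_DD]
    congr 1 <;> funext j
    · linear_combination hwC' j + (w j : ℂ) ^ 2 * (he2' j + hf2' j)
    · ring
    · ring
    · linear_combination hwC' j + (w j : ℂ) ^ 2 * (he2' j + hf2' j)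
  · intro j; linear_combination hwC' j + (w j : ℂ) ^ 2 * (he2' j + hf2' j)
  · rw [DD_transpose, DD_mul, one_eq_DD]
    congr 1 <;> funext j
    · linear_combination hwC' j + (w j : ℂ) ^ 2 * (he2' j + hf2' j)
    · ring
    · ring
    · linear_combination hwC' j + (w j : ℂ) ^ 2 * (he2' j + hf2' j)
  · rw [DD_mul, one_eq_DD]
    congr 1 <;> funext j <;> push_cast
    · linear_combination hwC' j
    · ring
    · ring
    · linear_combination hwC' j
  · rw [DD_mul, one_eq_DD]
    congr 1 <;> funext j
    · linear_combination hwC' j + (w j : ℂ) ^ 2 * (he2' j + hf2' j)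
    · ring
    · ring
    · linear_combination hwC' j + (w j : ℂ) ^ 2 * (he2' j + hf2' j)
  · rw [ha, hu, DD_mul, DD_mul]
    congr 1 <;> funext j <;> push_cast
    · linear_combination -hwC' j - 2 * (w j : ℂ) ^ 2 * c j * hef j
    · linear_combination -(Complex.I * s j) * hwC' j
        - (w j : ℂ) ^ 2 * c j * (he2' j - hf2' j)
    · ring
    · linear_combination -hwC' j - (w j : ℂ) ^ 2 * (he2' j + hf2' j)

/-- for `t ∈ ℝⁿ` with all `|t_j| < π/4`, one has the coset identity
`Sp(2n,ℝ)·n_t·K_ℂ = Sp(2n,ℝ)·a_t·K_ℂ` in `Sp(2n,ℂ)`, where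
`n_t = [[I, i·diag(sin 2t_j)],[0, I]]`. -/
theorem stmt_14 (n : ℕ) (t : Fin n → ℝ) (ht : ∀ j, |t j| < Real.pi / 4) :
    {m : Matrix (Fin n ⊕ Fin n) (Fin n ⊕ Fin n) ℂ | ∃ g ∈ SpR n, ∃ k ∈ KC n,
        m = g * uMat n (fun j => Real.sin (2 * t j)) * k} =
    {m : Matrix (Fin n ⊕ Fin n) (Fin n ⊕ Fin n) ℂ | ∃ g ∈ SpR n, ∃ k ∈ KC n,
        m = g * aMat n t * k} := by
  obtain ⟨g₀, hg₀, g₁, hg₁, k₀, hk₀, k₁, hk₁, hg, hk, hu⟩ := key n t ht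
  ext m
  constructor
  · rintro ⟨g, hg', k, hk', rfl⟩
    refine ⟨g * g₀, SpR_mul hg' hg₀, k₀ * k, KC_mul hk₀ hk', ?_⟩
    rw [hu]
    simp only [Matrix.mul_assoc]
  · rintro ⟨g, hg', k, hk', rfl⟩
    refine ⟨g * g₁, SpR_mul hg' hg₁, k₁ * k, KC_mul hk₁ hk', ?_⟩
    rw [hu]
    calc g * aMat n t * k = g * 1 * aMat n t * 1 * k := by simp only [Matrix.mul_one]
      _ = g * (g₁ * g₀) * aMat n t * (k₀ * k₁) * k := by rw [hg, hk]
      _ = _ := by simp only [Matrix.mul_assoc]
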